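/- arXiv:1512.06960 — 6 statements merged into one kernel-verified Lean document; each statement's English description precedes it below -/
import Mathlib

section
/- Assume that for every t ∈ ℕ and every history y^t ∈ Y^{t+1} the infimum defining the sequential value 𝕌_t(y^t) is attained by some distortion sequence. Then for every t and y^t the Bellman equation holds: 𝕌_t(y^t) = c_t(y^t) + γ · inf_{m ∈ 𝓜(y_t)} [ Σ_{y'∈Y} P(y_t, y') m(y') 𝕌_{t+1}(y^t, y') + θ · ℰ[m](y_t) ], and the infimum on the right-hand side is attained. -/
open Finset

/-! Setup for the minimizing agent's sequential problem (robust multiplier preferences)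
over a finite Markov chain `Y` with transition kernel `P`.

A history of length `t+1` is `h : Fin (t+1) → Y`; a continuation of length `j` is
`z : Fin j → Y`.  A distortion sequence from a node with last state `y0` assigns to every
continuation `z` a conditional likelihood ratio `d j z : Y → ℝ` in `𝓜(lastState y0 z)`. -/

/-- Last state of the chain after continuation `z` of length `j` from a node ending at `y0`. -/
def lastState {Y : Type} (y0 : Y) {j : ℕ} (z : Fin j → Y) : Y :=
  (Fin.cons y0 z : Fin (j + 1) → Y) (Fin.last j)

/-- Probability weight `∏_{k=1}^{j} P(s_{k-1}, s_k)` of continuation `z` from `y0` under `P`. -/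
def pathWeight {Y : Type} (P : Y → Y → ℝ) (y0 : Y) {j : ℕ} (z : Fin j → Y) : ℝ :=
  ∏ k : Fin j, P ((Fin.cons y0 z : Fin (j + 1) → Y) k.castSucc) (z k)

/-- Conditional relative entropy `ℰ[m](y) = Σ_{y'} P(y,y') m(y') log m(y')`
(with the convention `0·log 0 = 0`, as `Real.log 0 = 0`). -/
noncomputable def condEnt {Y : Type} [Fintype Y] (P : Y → Y → ℝ) (m : Y → ℝ) (y : Y) : ℝ :=
  ∑ y', P y y' * (m y' * Real.log (m y'))

/-- A distortion sequence: at every continuation `z`, `d j z` is nonnegative with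
conditional mean one under `P(lastState y0 z, ·)`. -/
def Admissible {Y : Type} [Fintype Y] (P : Y → Y → ℝ) (y0 : Y)
    (d : (j : ℕ) → (Fin j → Y) → Y → ℝ) : Prop :=
  ∀ (j : ℕ) (z : Fin j → Y),
    (∀ y', 0 ≤ d j z y') ∧ (∑ y', P (lastState y0 z) y' * d j z y' = 1)

/-- Cumulative likelihood ratio `M_{t,j}` of distortion sequence `d` along continuation `z`. -/
def like {Y : Type} (d : (j : ℕ) → (Fin j → Y) → Y → ℝ) {j : ℕ} (z : Fin j → Y) : ℝ :=
  ∏ k : Fin j, d k.val (fun i => z (Fin.castLE k.isLt.le i)) (z k)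

/-- Concatenation of a history of length `t+1` with a continuation of length `j`. -/
def extHist {Y : Type} {t j : ℕ} (h : Fin (t + 1) → Y) (z : Fin j → Y) :
    Fin (t + j + 1) → Y :=
  fun i => Fin.append h z (Fin.cast (by omega) i)

/-- The `j`-th term `γ^j · E[ M_{t,j} · ( c_{t+j} + θγ·ℰ[m_{t+j+1}] ) | y^t ]` of the
minimizing agent's objective. -/
noncomputable def objTerm {Y : Type} [Fintype Y] (P : Y → Y → ℝ) (γ θ : ℝ)
    (c : (n : ℕ) → (Fin (n + 1) → Y) → ℝ) (t : ℕ) (h : Fin (t + 1) → Y)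
    (d : (j : ℕ) → (Fin j → Y) → Y → ℝ) (j : ℕ) : ℝ :=
  γ ^ j * ∑ z : Fin j → Y,
    pathWeight P (h (Fin.last t)) z * like d z *
      (c (t + j) (extHist h z) + θ * γ * condEnt P (d j z) (lastState (h (Fin.last t)) z))

/-- The sequential value `𝕌_t(y^t)`: the infimum of the objective over admissible
distortion sequences (with a well-defined, i.e. summable, objective). -/
noncomputable def seqVal {Y : Type} [Fintype Y] (P : Y → Y → ℝ) (γ θ : ℝ)
    (c : (n : ℕ) → (Fin (n + 1) → Y) → ℝ) (t : ℕ) (h : Fin (t + 1) → Y) : ℝ :=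
  sInf {v : ℝ | ∃ d, Admissible P (h (Fin.last t)) d ∧
    Summable (objTerm P γ θ c t h d) ∧ v = ∑' j, objTerm P γ θ c t h d j}

/-- The part of a distortion sequence that follows a first transition to `y`. -/
def tailDist {Y : Type} (d : (j : ℕ) → (Fin j → Y) → Y → ℝ) (y : Y) :
    (j : ℕ) → (Fin j → Y) → Y → ℝ :=
  fun j z => d (j + 1) (Fin.cons y z)

/-- The distortion sequence that starts with `m` and follows `D y` after a first transition
to `y`. -/
def consDist {Y : Type} (m : Y → ℝ) (D : Y → (j : ℕ) → (Fin j → Y) → Y → ℝ) :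
    (j : ℕ) → (Fin j → Y) → Y → ℝ
  | 0, _ => m
  | j + 1, z => D (z 0) j (Fin.tail z)

theorem tailDist_consDist {Y : Type} (m : Y → ℝ) (D : Y → (j : ℕ) → (Fin j → Y) → Y → ℝ)
    (y : Y) : tailDist (consDist m D) y = D y := by
  funext j z
  simp [tailDist, consDist]

theorem lastState_cons {Y : Type} (y0 y : Y) {j : ℕ} (z : Fin j → Y) :
    lastState y0 (Fin.cons y z : Fin (j + 1) → Y) = lastState y z := rfl

theorem pathWeight_cons {Y : Type} (P : Y → Y → ℝ) (y0 y : Y) {j : ℕ} (z : Fin j → Y) :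
    pathWeight P y0 (Fin.cons y z : Fin (j + 1) → Y) = P y0 y * pathWeight P y z := by
  unfold pathWeight
  rw [Fin.prod_univ_succ]
  rfl

theorem like_cons {Y : Type} (d : (j : ℕ) → (Fin j → Y) → Y → ℝ) (y : Y) {j : ℕ}
    (z : Fin j → Y) :
    like d (Fin.cons y z : Fin (j + 1) → Y) = d 0 Fin.elim0 y * like (tailDist d y) z := by
  unfold like
  rw [Fin.prod_univ_succ]
  congr 1
  · exact congrFun (congrArg (d 0) (Subsingleton.elim _ _)) y
  · refine Finset.prod_congr rfl fun k _ => ?_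
    simp only [tailDist, Fin.cons_succ]
    refine congrFun (congrArg (d (k.val + 1)) (funext fun i => ?_)) _
    refine Fin.cases ?_ (fun i => ?_) i <;> rfl

theorem apply_extHist_cons {Y : Type} (c : (n : ℕ) → (Fin (n + 1) → Y) → ℝ) {t j : ℕ}
    (h : Fin (t + 1) → Y) (y : Y) (z : Fin j → Y) :
    c (t + (j + 1)) (extHist h (Fin.cons y z : Fin (j + 1) → Y)) =
      c (t + 1 + j) (extHist (Fin.snoc h y : Fin (t + 1 + 1) → Y) z) := by
  have apply_cast : ∀ {n n' : ℕ} (e : n = n') (f : Fin (n + 1) → Y) (f' : Fin (n' + 1) → Y),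
      (∀ i, f i = f' (Fin.cast (by omega) i)) → c n f = c n' f' := by
    rintro n _ rfl f f' hf
    exact congrArg (c n) (funext hf)
  refine apply_cast (by omega) _ _ fun i => ?_
  simp only [extHist, Fin.append_right_cons]
  rfl

theorem objTerm_zero {Y : Type} [Fintype Y] (P : Y → Y → ℝ) (γ θ : ℝ)
    (c : (n : ℕ) → (Fin (n + 1) → Y) → ℝ) (t : ℕ) (h : Fin (t + 1) → Y)
    (d : (j : ℕ) → (Fin j → Y) → Y → ℝ) :
    objTerm P γ θ c t h d 0 =
      c t h + θ * γ * condEnt P (d 0 Fin.elim0) (h (Fin.last t)) := by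
  have hext : extHist h (default : Fin 0 → Y) = h := by
    funext i
    exact Fin.append_left h default i
  have hdef : (default : Fin 0 → Y) = Fin.elim0 := Subsingleton.elim _ _
  simp only [objTerm, pathWeight, like, Fintype.sum_unique, Finset.univ_eq_empty,
    Finset.prod_empty, pow_zero, one_mul]
  rw [hext, hdef]
  rfl

theorem objTerm_succ {Y : Type} [Fintype Y] (P : Y → Y → ℝ) (γ θ : ℝ)
    (c : (n : ℕ) → (Fin (n + 1) → Y) → ℝ) (t : ℕ) (h : Fin (t + 1) → Y)
    (d : (j : ℕ) → (Fin j → Y) → Y → ℝ) (j : ℕ) :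
    objTerm P γ θ c t h d (j + 1) =
      γ * ∑ y, P (h (Fin.last t)) y * d 0 Fin.elim0 y *
        objTerm P γ θ c (t + 1) (Fin.snoc h y) (tailDist d y) j := by
  unfold objTerm
  rw [← (Fin.consEquiv fun _ : Fin (j + 1) => Y).sum_comp, Fintype.sum_prod_type, pow_succ',
    mul_assoc, Finset.mul_sum]
  congr 1
  refine Finset.sum_congr rfl fun y _ => ?_
  rw [Finset.mul_sum, Finset.mul_sum, Finset.mul_sum]
  refine Finset.sum_congr rfl fun z _ => ?_
  simp only [Fin.consEquiv, Equiv.coe_fn_mk, pathWeight_cons, like_cons, lastState_cons,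
    apply_extHist_cons, Fin.snoc_last, tailDist]
  ring

theorem Admissible.tailDist {Y : Type} [Fintype Y] {P : Y → Y → ℝ} {y0 : Y}
    {d : (j : ℕ) → (Fin j → Y) → Y → ℝ} (hd : Admissible P y0 d) (y : Y) :
    Admissible P y (tailDist d y) :=
  fun j z => hd (j + 1) (Fin.cons y z)

theorem Admissible.consDist {Y : Type} [Fintype Y] {P : Y → Y → ℝ} {y0 : Y} {m : Y → ℝ}
    {D : Y → (j : ℕ) → (Fin j → Y) → Y → ℝ} (hm0 : ∀ y, 0 ≤ m y)
    (hm1 : ∑ y, P y0 y * m y = 1) (hD : ∀ y, Admissible P y (D y)) :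
    Admissible P y0 (consDist m D) := by
  rintro (_ | j) z
  · exact ⟨hm0, hm1⟩
  · obtain ⟨⟨y, z⟩, rfl⟩ := (Fin.consEquiv fun _ : Fin (j + 1) => Y).surjective z
    exact hD y j z

theorem condEnt_nonneg {Y : Type} [Fintype Y] {P : Y → Y → ℝ} {y : Y} {m : Y → ℝ}
    (hP0 : ∀ y', 0 ≤ P y y') (hP1 : ∑ y', P y y' = 1) (hm0 : ∀ y', 0 ≤ m y')
    (hm1 : ∑ y', P y y' * m y' = 1) : 0 ≤ condEnt P m y := by
  calc (0 : ℝ) = ∑ y', P y y' * (m y' - 1) := by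
        simp [mul_sub, Finset.sum_sub_distrib, hP1, hm1]
    _ ≤ condEnt P m y := Finset.sum_le_sum fun y' _ =>
        mul_le_mul_of_nonneg_left (Real.self_sub_one_le_mul_log (hm0 y')) (hP0 y')

theorem neg_mul_pow_le_objTerm {Y : Type} [Fintype Y]
    {P : Y → Y → ℝ} (hP0 : ∀ y y', 0 ≤ P y y') (hP1 : ∀ y, ∑ y', P y y' = 1)
    {γ θ C : ℝ} (hγ0 : 0 ≤ γ) (hθ : 0 ≤ θ)
    {c : (n : ℕ) → (Fin (n + 1) → Y) → ℝ} (hc : ∀ n h, |c n h| ≤ C) (j : ℕ) :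
    ∀ (t : ℕ) (h : Fin (t + 1) → Y) (d : (j : ℕ) → (Fin j → Y) → Y → ℝ),
      Admissible P (h (Fin.last t)) d → -(C * γ ^ j) ≤ objTerm P γ θ c t h d j := by
  induction j with
  | zero =>
    intro t h d hd
    rw [objTerm_zero]
    have hent := condEnt_nonneg (hP0 _) (hP1 _) (hd 0 Fin.elim0).1 (hd 0 Fin.elim0).2
    have hpos := mul_nonneg (mul_nonneg hθ hγ0) hent
    have hlow := (abs_le.1 (hc t h)).1
    simp only [pow_zero, mul_one]
    exact hlow.trans (le_add_of_nonneg_right hpos)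
  | succ j ih =>
    intro t h d hd
    have hw1 : ∑ y, P (h (Fin.last t)) y * d 0 Fin.elim0 y = 1 := (hd 0 Fin.elim0).2
    rw [objTerm_succ]
    calc -(C * γ ^ (j + 1))
        = γ * ∑ y, P (h (Fin.last t)) y * d 0 Fin.elim0 y * -(C * γ ^ j) := by
          rw [← Finset.sum_mul, hw1]; ring
      _ ≤ _ := by
          refine mul_le_mul_of_nonneg_left (Finset.sum_le_sum fun y _ => ?_) hγ0
          refine mul_le_mul_of_nonneg_left (ih _ _ _ ?_)
            (mul_nonneg (hP0 _ _) ((hd 0 Fin.elim0).1 y))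
          rw [Fin.snoc_last]
          exact hd.tailDist y

theorem seqVal_le_tsum {Y : Type} [Fintype Y]
    {P : Y → Y → ℝ} (hP0 : ∀ y y', 0 ≤ P y y') (hP1 : ∀ y, ∑ y', P y y' = 1)
    {γ θ C : ℝ} (hγ0 : 0 ≤ γ) (hγ1 : γ < 1) (hθ : 0 ≤ θ)
    {c : (n : ℕ) → (Fin (n + 1) → Y) → ℝ} (hc : ∀ n h, |c n h| ≤ C)
    {t : ℕ} {h : Fin (t + 1) → Y} {d : (j : ℕ) → (Fin j → Y) → Y → ℝ}
    (hd : Admissible P (h (Fin.last t)) d) (hs : Summable (objTerm P γ θ c t h d)) :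
    seqVal P γ θ c t h ≤ ∑' j, objTerm P γ θ c t h d j := by
  refine csInf_le ⟨∑' j, -(C * γ ^ j), ?_⟩ ⟨d, hd, hs, rfl⟩
  rintro _ ⟨e, he, hse, rfl⟩
  exact Summable.tsum_le_tsum (fun j => neg_mul_pow_le_objTerm hP0 hP1 hγ0 hθ hc j t h e he)
    ((summable_geometric_of_lt_one hγ0 hγ1).mul_left C).neg hse

/-- Summability of the objective is inherited by the continuations that are reached with
positive distorted probability. -/
theorem Summable.objTerm_tailDist {Y : Type} [Fintype Y]
    {P : Y → Y → ℝ} (hP0 : ∀ y y', 0 ≤ P y y') (hP1 : ∀ y, ∑ y', P y y' = 1)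
    {γ θ C : ℝ} (hγ0 : 0 < γ) (hγ1 : γ < 1) (hθ : 0 ≤ θ)
    {c : (n : ℕ) → (Fin (n + 1) → Y) → ℝ} (hc : ∀ n h, |c n h| ≤ C)
    {t : ℕ} {h : Fin (t + 1) → Y} {d : (j : ℕ) → (Fin j → Y) → Y → ℝ}
    (hd : Admissible P (h (Fin.last t)) d) (hs : Summable (objTerm P γ θ c t h d)) {y : Y}
    (hy : P (h (Fin.last t)) y * d 0 Fin.elim0 y ≠ 0) :
    Summable (objTerm P γ θ c (t + 1) (Fin.snoc h y) (tailDist d y)) := by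
  have hgeo : Summable fun j : ℕ => C * γ ^ j :=
    (summable_geometric_of_lt_one hγ0.le hγ1).mul_left C
  have hw0 : ∀ y', 0 ≤ P (h (Fin.last t)) y' * d 0 Fin.elim0 y' := fun y' =>
    mul_nonneg (hP0 _ _) ((hd 0 Fin.elim0).1 y')
  have hw1 : ∑ y', P (h (Fin.last t)) y' * d 0 Fin.elim0 y' = 1 := (hd 0 Fin.elim0).2
  have hlow : ∀ y' j,
      0 ≤ objTerm P γ θ c (t + 1) (Fin.snoc h y') (tailDist d y') j + C * γ ^ j := by
    intro y' j
    have := neg_mul_pow_le_objTerm hP0 hP1 hγ0.le hθ hc j (t + 1) (Fin.snoc h y')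
      (tailDist d y') (by rw [Fin.snoc_last]; exact hd.tailDist y')
    linarith
  have hmix : Summable fun j => ∑ y', P (h (Fin.last t)) y' * d 0 Fin.elim0 y' *
      (objTerm P γ θ c (t + 1) (Fin.snoc h y') (tailDist d y') j + C * γ ^ j) := by
    refine ((((summable_nat_add_iff 1).2 hs).mul_left γ⁻¹).add hgeo).congr fun j => ?_
    simp only [objTerm_succ, mul_add, Finset.sum_add_distrib, ← Finset.sum_mul, hw1]
    rw [inv_mul_cancel_left₀ hγ0.ne', one_mul]
  have hy_summable := hmix.of_nonneg_of_le
    (fun j => mul_nonneg (hw0 y) (hlow y j))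
    (fun j => Finset.single_le_sum
      (f := fun y' => P (h (Fin.last t)) y' * d 0 Fin.elim0 y' *
        (objTerm P γ θ c (t + 1) (Fin.snoc h y') (tailDist d y') j + C * γ ^ j))
      (fun y' _ => mul_nonneg (hw0 y') (hlow y' j)) (Finset.mem_univ y))
  exact (((summable_mul_left_iff hy).1 hy_summable).sub hgeo).congr fun j => by ring

theorem hasSum_objTerm {Y : Type} [Fintype Y] (P : Y → Y → ℝ) (γ θ : ℝ)
    (c : (n : ℕ) → (Fin (n + 1) → Y) → ℝ) (t : ℕ) (h : Fin (t + 1) → Y)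
    (d : (j : ℕ) → (Fin j → Y) → Y → ℝ)
    (hs : ∀ y, P (h (Fin.last t)) y * d 0 Fin.elim0 y ≠ 0 →
      Summable (objTerm P γ θ c (t + 1) (Fin.snoc h y) (tailDist d y))) :
    HasSum (objTerm P γ θ c t h d)
      (c t h + γ * ((∑ y, P (h (Fin.last t)) y * d 0 Fin.elim0 y *
          ∑' j, objTerm P γ θ c (t + 1) (Fin.snoc h y) (tailDist d y) j)
        + θ * condEnt P (d 0 Fin.elim0) (h (Fin.last t)))) := by
  rw [← hasSum_nat_add_iff' 1]
  simp only [objTerm_succ, Finset.sum_range_one, objTerm_zero]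
  have hsum : HasSum (fun j => ∑ y, P (h (Fin.last t)) y * d 0 Fin.elim0 y *
        objTerm P γ θ c (t + 1) (Fin.snoc h y) (tailDist d y) j)
      (∑ y, P (h (Fin.last t)) y * d 0 Fin.elim0 y *
        ∑' j, objTerm P γ θ c (t + 1) (Fin.snoc h y) (tailDist d y) j) := by
    refine hasSum_sum fun y _ => ?_
    by_cases hy : P (h (Fin.last t)) y * d 0 Fin.elim0 y = 0
    · simp only [hy, zero_mul]
      exact hasSum_zero
    · exact (hs y hy).hasSum.mul_left _
  refine (congrArg (HasSum _ · _) ?_).mpr (hsum.mul_left γ)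
  ring

/-- **Bellman equation for the minimizing agent's sequential problem (SP-MA ⇒ FP-MA).**
If for every `t` and history `y^t` the infimum defining `𝕌_t(y^t)` is attained by some
distortion sequence, then for every `t` and `y^t`:
`𝕌_t(y^t) = c_t(y^t) + γ · inf_{m ∈ 𝓜(y_t)} [ Σ_{y'} P(y_t,y') m(y') 𝕌_{t+1}(y^t,y')
+ θ·ℰ[m](y_t) ]`, and the infimum on the right-hand side is attained. -/
theorem stmt6 {Y : Type} [Fintype Y] [Nonempty Y]
    (P : Y → Y → ℝ) (hP0 : ∀ y y', 0 ≤ P y y') (hP1 : ∀ y, ∑ y', P y y' = 1)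
    (γ θ C : ℝ) (hγ0 : 0 < γ) (hγ1 : γ < 1) (hθ : 0 < θ) (hC : 0 < C)
    (c : (n : ℕ) → (Fin (n + 1) → Y) → ℝ) (hc : ∀ n h, |c n h| ≤ C)
    (hattain : ∀ (t : ℕ) (h : Fin (t + 1) → Y),
      ∃ d, Admissible P (h (Fin.last t)) d ∧ Summable (objTerm P γ θ c t h d) ∧
        (∑' j, objTerm P γ θ c t h d j) = seqVal P γ θ c t h) :
    ∀ (t : ℕ) (h : Fin (t + 1) → Y),
      ∃ v : ℝ,
        IsLeast {w : ℝ | ∃ m : Y → ℝ, (∀ y', 0 ≤ m y') ∧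
            (∑ y', P (h (Fin.last t)) y' * m y' = 1) ∧
            w = (∑ y', P (h (Fin.last t)) y' * m y' *
                  seqVal P γ θ c (t + 1) (Fin.snoc h y'))
                + θ * condEnt P m (h (Fin.last t))} v ∧
        seqVal P γ θ c t h = c t h + γ * v := by
  intro t h
  obtain ⟨d, hd, hs, hval⟩ := hattain t h
  have htail := fun y => Summable.objTerm_tailDist hP0 hP1 hγ0 hγ1 hθ.le hc hd hs (y := y)
  rw [(hasSum_objTerm P γ θ c t h d htail).tsum_eq] at hval
  have hle : ∀ m : Y → ℝ, (∀ y', 0 ≤ m y') → (∑ y', P (h (Fin.last t)) y' * m y' = 1) →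
      seqVal P γ θ c t h ≤ c t h + γ * ((∑ y', P (h (Fin.last t)) y' * m y' *
        seqVal P γ θ c (t + 1) (Fin.snoc h y')) + θ * condEnt P m (h (Fin.last t))) := by
    intro m hm0 hm1
    choose D hD hDs hDval using fun y => hattain (t + 1) (Fin.snoc h y)
    simp only [Fin.snoc_last] at hD
    have hsum := hasSum_objTerm P γ θ c t h (consDist m D) fun y _ => by
      rw [tailDist_consDist]
      exact hDs y
    have := seqVal_le_tsum hP0 hP1 hγ0.le hγ1 hθ.le hc
      (Admissible.consDist hm0 hm1 hD) hsum.summable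
    rw [hsum.tsum_eq] at this
    simpa only [tailDist_consDist, hDval, consDist] using this
  have hge : (∑ y', P (h (Fin.last t)) y' * d 0 Fin.elim0 y' *
        seqVal P γ θ c (t + 1) (Fin.snoc h y')) ≤
      ∑ y', P (h (Fin.last t)) y' * d 0 Fin.elim0 y' *
        ∑' j, objTerm P γ θ c (t + 1) (Fin.snoc h y') (tailDist d y') j := by
    refine Finset.sum_le_sum fun y _ => ?_
    by_cases hy : P (h (Fin.last t)) y * d 0 Fin.elim0 y = 0
    · simp only [hy, zero_mul, le_refl]
    · refine mul_le_mul_of_nonneg_left (seqVal_le_tsum hP0 hP1 hγ0.le hγ1 hθ.le hc ?_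
        (htail y hy)) (mul_nonneg (hP0 _ _) ((hd 0 Fin.elim0).1 y))
      rw [Fin.snoc_last]
      exact hd.tailDist y
  have hd0 := hd 0 Fin.elim0
  have heq : seqVal P γ θ c t h = c t h + γ * ((∑ y', P (h (Fin.last t)) y' *
      d 0 Fin.elim0 y' * seqVal P γ θ c (t + 1) (Fin.snoc h y'))
        + θ * condEnt P (d 0 Fin.elim0) (h (Fin.last t))) := by
    refine le_antisymm (hle _ hd0.1 hd0.2) ?_
    rw [← hval]
    gcongr
  refine ⟨_, ⟨⟨d 0 Fin.elim0, hd0.1, hd0.2, rfl⟩, ?_⟩, heq⟩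
  rintro _ ⟨m, hm0, hm1, rfl⟩
  have := hle m hm0 hm1
  rw [heq] at this
  exact le_of_mul_le_mul_left (le_of_add_le_add_left this) hγ0
end

section
/- Let μ be a probability measure on ℝ, let S : ℝ → [0,∞) be measurable and antitone (nonincreasing), and suppose 0 < ∫ S dμ = γ < ∞. Define the measure ν with density S/γ with respect to μ. Then ν is a probability measure and ν is first-order stochastically dominated by μ: for every t ∈ ℝ, ν((−∞, t]) ≥ μ((−∞, t]). -/
open MeasureTheory

/-- A probability measure with antitone density with respect to a probability measure `μ` is
first-order stochastically dominated by `μ`. -/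
theorem measure_Iic_le_withDensity_of_antitone {α : Type*} [LinearOrder α] [MeasurableSpace α]
    {μ : Measure α} [IsProbabilityMeasure μ] {f : α → ENNReal} (hf : Antitone f)
    [IsProbabilityMeasure (μ.withDensity f)] {t : α} (ht : MeasurableSet (Set.Iic t)) :
    μ (Set.Iic t) ≤ μ.withDensity f (Set.Iic t) := by
  rcases le_total 1 (f t) with h | h
  · rw [withDensity_apply _ ht, ← setLIntegral_one]
    exact setLIntegral_mono' ht fun x hx => h.trans (hf hx)
  · have hcompl : μ.withDensity f (Set.Iic t)ᶜ ≤ μ (Set.Iic t)ᶜ := by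
      rw [withDensity_apply _ ht.compl, ← setLIntegral_one]
      exact setLIntegral_mono' ht.compl fun x hx => (hf (not_le.mp hx).le).trans h
    rw [← compl_compl (Set.Iic t), prob_compl_eq_one_sub ht.compl, prob_compl_eq_one_sub ht.compl]
    exact tsub_le_tsub_left hcompl 1

/-- **Nonincreasing pricing kernels induce first-order stochastically dominated laws.**
If `μ` is a probability measure on `ℝ`, `S : ℝ → [0,∞)` is measurable and nonincreasing with
`0 < ∫ S dμ = γ < ∞`, then the measure `ν` with density `S/γ` w.r.t. `μ` is a probability
measure and is first-order stochastically dominated by `μ`: `ν((−∞,t]) ≥ μ((−∞,t])` for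
every `t`. -/
theorem stmt9 (μ : Measure ℝ) [IsProbabilityMeasure μ]
    (S : ℝ → ℝ) (hSmeas : Measurable S) (hS0 : ∀ x, 0 ≤ S x) (hSanti : Antitone S)
    (hSint : Integrable S μ)
    (γ : ℝ) (hγpos : 0 < γ) (hγ : ∫ x, S x ∂μ = γ) :
    IsProbabilityMeasure (μ.withDensity fun x => ENNReal.ofReal (S x / γ)) ∧
    ∀ t : ℝ, μ (Set.Iic t) ≤ (μ.withDensity fun x => ENNReal.ofReal (S x / γ)) (Set.Iic t) := by
  have hprob : IsProbabilityMeasure (μ.withDensity fun x => ENNReal.ofReal (S x / γ)) := by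
    refine ⟨?_⟩
    rw [withDensity_apply _ MeasurableSet.univ, setLIntegral_univ,
      ← ofReal_integral_eq_lintegral_ofReal (hSint.div_const γ)
        (ae_of_all _ fun x => div_nonneg (hS0 x) hγpos.le),
      integral_div, hγ, div_self hγpos.ne', ENNReal.ofReal_one]
  have hanti : Antitone fun x => ENNReal.ofReal (S x / γ) := fun x y hxy =>
    ENNReal.ofReal_le_ofReal (div_le_div_of_nonneg_right (hSanti hxy) hγpos.le)
  exact ⟨hprob, fun t => measure_Iic_le_withDensity_of_antitone hanti measurableSet_Iic⟩
end

section
/- Let (Ω, 𝓕, P) be a probability space, W : Ω → ℝ bounded and measurable, and θ > 0. Let P̃ be the probability measure with density exp(−W/θ) / ∫ exp(−W/θ) dP with respect to P. Then for every c ∈ ℝ, P̃(W ≤ c) ≥ P(W ≤ c). -/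
open MeasureTheory

/-- Tilting a probability measure by `exp ∘ f` weakly raises the probability of every
superlevel set of `f`. -/
theorem measure_superlevel_le_tilted {Ω : Type*} [MeasurableSpace Ω] (P : Measure Ω)
    [IsProbabilityMeasure P] {f : Ω → ℝ} (hf : Measurable f)
    (hint : Integrable (fun ω => Real.exp (f ω)) P) (a : ℝ) :
    P {ω | a ≤ f ω} ≤ P.tilted f {ω | a ≤ f ω} := by
  have hs : MeasurableSet {ω | a ≤ f ω} := measurableSet_le measurable_const hf
  have hprob : IsProbabilityMeasure (P.tilted f) := isProbabilityMeasure_tilted hint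
  have hZ : 0 < ∫ ω, Real.exp (f ω) ∂P := integral_exp_pos hint
  rcases le_total (∫ ω, Real.exp (f ω) ∂P) (Real.exp a) with h | h
  · rw [tilted_apply' P f hs, ← setLIntegral_one]
    refine setLIntegral_mono' hs fun ω hω => ?_
    rw [ENNReal.one_le_ofReal, one_le_div hZ]
    exact h.trans (Real.exp_le_exp.2 hω)
  · have hcompl : P.tilted f {ω | a ≤ f ω}ᶜ ≤ P {ω | a ≤ f ω}ᶜ := by
      rw [tilted_apply' P f hs.compl, ← setLIntegral_one]
      refine setLIntegral_mono' hs.compl fun ω hω => ?_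
      rw [ENNReal.ofReal_le_one, div_le_one hZ]
      have hlt : f ω < a := not_le.1 fun hle => hω hle
      exact (Real.exp_le_exp.2 hlt.le).trans h
    rw [← compl_compl {ω | a ≤ f ω}, prob_compl_eq_one_sub hs.compl,
      prob_compl_eq_one_sub hs.compl]
    exact tsub_le_tsub_left hcompl 1

/-- **The worst-case Gibbs measure slants mass toward low-utility states.**
If `W : Ω → ℝ` is bounded measurable, `θ > 0`, and `P̃` is the probability measure with
density `exp(−W/θ)/∫ exp(−W/θ) dP` with respect to `P`, then for every `c ∈ ℝ`,
`P̃(W ≤ c) ≥ P(W ≤ c)`. -/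
theorem stmt10 {Ω : Type*} [MeasurableSpace Ω] (P : Measure Ω) [IsProbabilityMeasure P]
    (W : Ω → ℝ) (hWmeas : Measurable W) (C : ℝ) (hWbd : ∀ ω, |W ω| ≤ C)
    (θ : ℝ) (hθ : 0 < θ)
    (Pt : Measure Ω)
    (hPt : Pt = P.withDensity fun ω =>
      ENNReal.ofReal (Real.exp (-W ω / θ) / ∫ ω', Real.exp (-W ω' / θ) ∂P)) :
    ∀ c : ℝ, P {ω | W ω ≤ c} ≤ Pt {ω | W ω ≤ c} := by
  intro c
  have hf : Measurable fun ω => -W ω / θ := hWmeas.neg.div_const θ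
  have hint : Integrable (fun ω => Real.exp (-W ω / θ)) P := by
    refine Integrable.of_bound hf.exp.aestronglyMeasurable (Real.exp (C / θ))
      (ae_of_all _ fun ω => ?_)
    rw [Real.norm_eq_abs, Real.abs_exp, Real.exp_le_exp]
    exact div_le_div_of_nonneg_right ((neg_le_abs _).trans (hWbd ω)) hθ.le
  have hset : {ω | W ω ≤ c} = {ω | -c / θ ≤ -W ω / θ} := by
    ext ω
    simp only [Set.mem_ofPred_eq, div_le_div_iff_of_pos_right hθ, neg_le_neg_iff]
  rw [hPt, hset]
  exact measure_superlevel_le_tilted P hf hint (-c / θ)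
end

section
/- Let (Ω, 𝓕, P) be a probability space and U : Ω → ℝ bounded and measurable. Then lim_{θ → ∞} ( −θ · log ∫ exp(−U/θ) dP ) = ∫ U dP. -/
open MeasureTheory

/-- The cumulant generating function of a random variable with values in a bounded interval has
derivative `∫ X` at `0`. -/
theorem hasDerivAt_cgf_zero_of_mem_Icc {Ω : Type*} [MeasurableSpace Ω] {P : Measure Ω}
    [IsProbabilityMeasure P] {X : Ω → ℝ} {a b : ℝ} (hX : AEMeasurable X P)
    (hb : ∀ᵐ ω ∂P, X ω ∈ Set.Icc a b) :
    HasDerivAt (ProbabilityTheory.cgf X P) (∫ ω, X ω ∂P) 0 := by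
  have h_set : ProbabilityTheory.integrableExpSet X P = Set.univ :=
    Set.eq_univ_of_forall fun _ => ProbabilityTheory.integrable_exp_mul_of_mem_Icc hX hb
  have h_zero : (0 : ℝ) ∈ interior (ProbabilityTheory.integrableExpSet X P) := by
    simp [h_set]
  have h_deriv := ProbabilityTheory.deriv_cgf_zero h_zero
  rw [probReal_univ, div_one] at h_deriv
  exact h_deriv ▸ (ProbabilityTheory.analyticAt_cgf h_zero).differentiableAt.hasDerivAt

/-- **No model uncertainty in the limit `θ → ∞`.**
For bounded measurable `U` on a probability space,
`lim_{θ→∞} (−θ · log ∫ exp(−U/θ) dP) = ∫ U dP`. -/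
theorem stmt14 {Ω : Type*} [MeasurableSpace Ω] (P : Measure Ω) [IsProbabilityMeasure P]
    (U : Ω → ℝ) (hUmeas : Measurable U) (C : ℝ) (hUbd : ∀ ω, |U ω| ≤ C) :
    Filter.Tendsto (fun θ : ℝ => -θ * Real.log (∫ ω, Real.exp (-U ω / θ) ∂P))
      Filter.atTop (nhds (∫ ω, U ω ∂P)) := by
  have h_slope := (hasDerivAt_cgf_zero_of_mem_Icc (P := P) hUmeas.aemeasurable
    (.of_forall fun ω => Set.mem_Icc.2 (abs_le.1 (hUbd ω)))).tendsto_slope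
  have h_inv : Filter.Tendsto (fun θ : ℝ => -θ⁻¹) Filter.atTop (nhdsWithin 0 {0}ᶜ) := by
    refine tendsto_nhdsWithin_iff.2 ⟨by simpa using (tendsto_inv_atTop_zero (𝕜 := ℝ)).neg, ?_⟩
    filter_upwards [Filter.eventually_gt_atTop 0] with θ hθ
    simpa using hθ.ne'
  refine (h_slope.comp h_inv).congr fun θ => ?_
  have h_exp : ∀ ω, -U ω / θ = -θ⁻¹ * U ω := fun ω => by ring
  simp [slope_def_field, ProbabilityTheory.cgf, ProbabilityTheory.mgf, h_exp, div_eq_mul_inv,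
    mul_comm]
end

section
/- Suppose bounded functions W_R : Y × 𝔹 × 𝔹 → ℝ and W_A : Y → ℝ satisfy the lender's Bellman system with constant endowment z̄ ∈ ℝ: setting W(y', B', b') = δ(y', B')·W_R(y', B', b') + (1 − δ(y', B'))·W_A(y'), for all (y, B, b): W_R(y, B, b) = max_{b' ∈ 𝔹} { z̄ + G(b, b'; Γ(y,B), y) + γ·R_θ[ W(·, Γ(y,B), b') ](y) } and W_A(y) = z̄ + γ·R_θ[ (1−π)·W_A(·) + π·W(·, 0, 0) ](y). Then for every Δ ∈ ℝ, the functions W_R + Δ/(1−γ) and W_A + Δ/(1−γ) satisfy the same system with endowment z̄ + Δ; moreover, at every state the set of maximizers b' is unchanged and the Gibbs weights exp(−W(y', Γ(y,B), b')/θ) / Σ_{y''} P(y, y'')·exp(−W(y'', Γ(y,B), b')/θ) are unchanged. -/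
open Finset

/-- Risk-sensitive operator `R_θ[g](y) = −θ·log Σ_{y'} P(y,y')·exp(−g(y')/θ)`. -/
noncomputable def Rop {Y : Type} [Fintype Y] (P : Y → Y → ℝ) (θ : ℝ) (g : Y → ℝ) (y : Y) : ℝ :=
  -θ * Real.log (∑ y', P y y' * Real.exp (-g y' / θ))

/-- Lender's trading payoff `G(b, b'; B', y) = q(y,B')·(b' − (1−λ)b) − (λ + (1−λ)ψ)·b`,
written as a function of the price `qv = q(y, B')` and the real bond positions. -/
noncomputable def Gpay (qv lam ψ b b' : ℝ) : ℝ :=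
  qv * (b' - (1 - lam) * b) - (lam + (1 - lam) * ψ) * b

/-- Option value `W(y,B,b) = δ(y,B)·W_R(y,B,b) + (1 − δ(y,B))·W_A(y)`. -/
def Wmix {Y B : Type} (δ : Y → B → ℝ) (WR : Y → B → B → ℝ) (WA : Y → ℝ)
    (y : Y) (Bb b : B) : ℝ :=
  δ y Bb * WR y Bb b + (1 - δ y Bb) * WA y

/-- The lender's Bellman system with constant per-period endowment `z`. -/
def SatBellman {Y : Type} [Fintype Y] (P : Y → Y → ℝ) (γ θ : ℝ)
    (Bset : Finset ℝ) (hB0 : (0 : ℝ) ∈ Bset)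
    (q : Y → ↥Bset → ℝ) (lam ψ : ℝ) (Γ : Y → ↥Bset → ↥Bset)
    (δ : Y → ↥Bset → ℝ) (π : ℝ) (z : ℝ)
    (WR : Y → ↥Bset → ↥Bset → ℝ) (WA : Y → ℝ) : Prop :=
  (∀ (y : Y) (Bb b : ↥Bset),
    WR y Bb b = ⨆ b' : ↥Bset,
      (z + Gpay (q y (Γ y Bb)) lam ψ (b : ℝ) (b' : ℝ) +
        γ * Rop P θ (fun y' => Wmix δ WR WA y' (Γ y Bb) b') y)) ∧
  (∀ y : Y,
    WA y = z + γ * Rop P θ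
      (fun y' => (1 - π) * WA y' + π * Wmix δ WR WA y' ⟨0, hB0⟩ ⟨0, hB0⟩) y)

/-- Shifting both value functions by a constant shifts the option value by that constant. -/
lemma Wmix_add_const {Y B : Type} (δ : Y → B → ℝ) (WR : Y → B → B → ℝ) (WA : Y → ℝ) (c : ℝ)
    (y : Y) (Bb b : B) :
    Wmix δ (fun y₁ Bb₁ b₁ => WR y₁ Bb₁ b₁ + c) (fun y₁ => WA y₁ + c) y Bb b =
      Wmix δ WR WA y Bb b + c := by
  unfold Wmix
  ring

lemma exp_neg_add_div (a c θ : ℝ) :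
    Real.exp (-(a + c) / θ) = Real.exp (-c / θ) * Real.exp (-a / θ) := by
  rw [← Real.exp_add]
  ring_nf

lemma sum_mul_exp_neg_add_div {Y : Type} [Fintype Y] (p g : Y → ℝ) (c θ : ℝ) :
    ∑ y, p y * Real.exp (-(g y + c) / θ) =
      Real.exp (-c / θ) * ∑ y, p y * Real.exp (-g y / θ) := by
  rw [Finset.mul_sum]
  refine Finset.sum_congr rfl fun y _ => ?_
  rw [exp_neg_add_div]
  ring

lemma sum_mul_exp_pos {Y : Type} [Fintype Y] (p : Y → ℝ) (hp0 : ∀ y, 0 ≤ p y)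
    (hp1 : ∑ y, p y = 1) (f : Y → ℝ) : 0 < ∑ y, p y * Real.exp (f y) := by
  obtain ⟨y, -, hy⟩ : ∃ y ∈ Finset.univ, 0 < p y :=
    Finset.exists_lt_of_sum_lt (by simp [hp1])
  exact Finset.sum_pos' (fun i _ => mul_nonneg (hp0 i) (Real.exp_pos _).le)
    ⟨y, Finset.mem_univ y, mul_pos hy (Real.exp_pos _)⟩

/-- Translation equivariance of the risk-sensitive operator. -/
lemma Rop_add_const {Y : Type} [Fintype Y] (P : Y → Y → ℝ) (hP0 : ∀ y y', 0 ≤ P y y')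
    (hP1 : ∀ y, ∑ y', P y y' = 1) {θ : ℝ} (hθ : θ ≠ 0) (g : Y → ℝ) (c : ℝ) (y : Y) :
    Rop P θ (fun y' => g y' + c) y = Rop P θ g y + c := by
  unfold Rop
  rw [sum_mul_exp_neg_add_div, Real.log_mul (Real.exp_pos _).ne'
    (sum_mul_exp_pos (P y) (hP0 y) (hP1 y) _).ne', Real.log_exp]
  field_simp
  ring

/-- **Irrelevance of the level of the lenders' endowment.**
If bounded `W_R, W_A` solve the lender's Bellman system with constant endowment `z̄`, then
for every `Δ ∈ ℝ` the shifted functions `W_R + Δ/(1−γ)`, `W_A + Δ/(1−γ)` solve the same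
system with endowment `z̄ + Δ`; moreover at every state the set of maximizing portfolios
`b'` is unchanged, and the worst-case Gibbs probability weights are unchanged. -/
theorem stmt16 {Y : Type} [Fintype Y] [Nonempty Y]
    (P : Y → Y → ℝ) (hP0 : ∀ y y', 0 ≤ P y y') (hP1 : ∀ y, ∑ y', P y y' = 1)
    (γ θ : ℝ) (hγ0 : 0 < γ) (hγ1 : γ < 1) (hθ : 0 < θ)
    (Bset : Finset ℝ) (hB0 : (0 : ℝ) ∈ Bset)
    (q : Y → ↥Bset → ℝ) (Cq : ℝ) (hq : ∀ y Bb, |q y Bb| ≤ Cq)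
    (lam ψ : ℝ) (hlam0 : 0 < lam) (hlam1 : lam ≤ 1) (hψ : 0 ≤ ψ)
    (Γ : Y → ↥Bset → ↥Bset) (δ : Y → ↥Bset → ℝ) (hδ : ∀ y Bb, δ y Bb = 0 ∨ δ y Bb = 1)
    (π : ℝ) (hπ0 : 0 ≤ π) (hπ1 : π ≤ 1) (zbar : ℝ)
    (WR : Y → ↥Bset → ↥Bset → ℝ) (WA : Y → ℝ)
    (CW : ℝ) (hWRbd : ∀ y Bb b, |WR y Bb b| ≤ CW) (hWAbd : ∀ y, |WA y| ≤ CW)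
    (hsat : SatBellman P γ θ Bset hB0 q lam ψ Γ δ π zbar WR WA) :
    ∀ Δ : ℝ,
      SatBellman P γ θ Bset hB0 q lam ψ Γ δ π (zbar + Δ)
        (fun y Bb b => WR y Bb b + Δ / (1 - γ)) (fun y => WA y + Δ / (1 - γ)) ∧
      (∀ (y : Y) (Bb b b₀ : ↥Bset),
        (∀ b' : ↥Bset,
          zbar + Gpay (q y (Γ y Bb)) lam ψ (b : ℝ) (b' : ℝ) +
              γ * Rop P θ (fun y' => Wmix δ WR WA y' (Γ y Bb) b') y
            ≤ zbar + Gpay (q y (Γ y Bb)) lam ψ (b : ℝ) (b₀ : ℝ) +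
              γ * Rop P θ (fun y' => Wmix δ WR WA y' (Γ y Bb) b₀) y) ↔
        (∀ b' : ↥Bset,
          (zbar + Δ) + Gpay (q y (Γ y Bb)) lam ψ (b : ℝ) (b' : ℝ) +
              γ * Rop P θ (fun y' =>
                Wmix δ (fun y₁ Bb₁ b₁ => WR y₁ Bb₁ b₁ + Δ / (1 - γ))
                  (fun y₁ => WA y₁ + Δ / (1 - γ)) y' (Γ y Bb) b') y
            ≤ (zbar + Δ) + Gpay (q y (Γ y Bb)) lam ψ (b : ℝ) (b₀ : ℝ) +
              γ * Rop P θ (fun y' =>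
                Wmix δ (fun y₁ Bb₁ b₁ => WR y₁ Bb₁ b₁ + Δ / (1 - γ))
                  (fun y₁ => WA y₁ + Δ / (1 - γ)) y' (Γ y Bb) b₀) y)) ∧
      (∀ (y y' : Y) (Bb b' : ↥Bset),
        Real.exp (-(Wmix δ (fun y₁ Bb₁ b₁ => WR y₁ Bb₁ b₁ + Δ / (1 - γ))
              (fun y₁ => WA y₁ + Δ / (1 - γ)) y' (Γ y Bb) b') / θ) /
            ∑ y'', P y y'' *
              Real.exp (-(Wmix δ (fun y₁ Bb₁ b₁ => WR y₁ Bb₁ b₁ + Δ / (1 - γ))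
                (fun y₁ => WA y₁ + Δ / (1 - γ)) y'' (Γ y Bb) b') / θ)
          = Real.exp (-(Wmix δ WR WA y' (Γ y Bb) b') / θ) /
            ∑ y'', P y y'' * Real.exp (-(Wmix δ WR WA y'' (Γ y Bb) b') / θ)) := by
  intro Δ
  have hγ : 1 - γ ≠ 0 := (sub_pos.2 hγ1).ne'
  have hc : Δ + γ * (Δ / (1 - γ)) = Δ / (1 - γ) := by
    field_simp
    ring
  generalize Δ / (1 - γ) = c at hc ⊢
  have hobj : ∀ (y : Y) (B' b' : ↥Bset) (G : ℝ),
      zbar + Δ + G + γ * Rop P θ (fun y' => Wmix δ (fun y₁ Bb₁ b₁ => WR y₁ Bb₁ b₁ + c)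
          (fun y₁ => WA y₁ + c) y' B' b') y =
        zbar + G + γ * Rop P θ (fun y' => Wmix δ WR WA y' B' b') y + c := by
    intro y B' b' G
    simp only [Wmix_add_const]
    rw [Rop_add_const P hP0 hP1 hθ.ne']
    linear_combination hc
  have : Nonempty ↥Bset := ⟨⟨0, hB0⟩⟩
  refine ⟨⟨fun y Bb b => ?_, fun y => ?_⟩, fun y Bb b b₀ => ?_, fun y y' Bb b' => ?_⟩
  · simp only [hobj]
    rw [hsat.1 y Bb b, ciSup_add (Set.finite_range _).bddAbove]
  · have hmix : ∀ y', (1 - π) * (WA y' + c) + π * (Wmix δ WR WA y' ⟨0, hB0⟩ ⟨0, hB0⟩ + c) =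
        (1 - π) * WA y' + π * Wmix δ WR WA y' ⟨0, hB0⟩ ⟨0, hB0⟩ + c := fun y' => by ring
    simp only [Wmix_add_const, hmix]
    rw [Rop_add_const P hP0 hP1 hθ.ne']
    linear_combination hsat.2 y - hc
  · simp only [hobj, add_le_add_iff_right]
  · simp only [Wmix_add_const]
    rw [sum_mul_exp_neg_add_div, exp_neg_add_div,
      mul_div_mul_left _ _ (Real.exp_pos _).ne']
end

section
/- Let A₁ = 1/(1 − γρ₁) and A₀ = γ·A₁·ρ₀/(1−γ). Suppose bounded functions W̄_R : Y × 𝔹 × 𝔹 → ℝ and W̄_A : Y → ℝ satisfy the reduced system: with W̄(y', B', b') = δ(y', B')·W̄_R(y', B', b') + (1 − δ(y', B'))·W̄_A(y'), for all (y, B, b): W̄_R(y, B, b) = max_{b'} { G(b, b'; Γ(y,B), y) − θγ·log Σ_{y'} P(y,y')·exp( −[ T_{η(1−γρ₁)}[ε](y', y)/(1−γρ₁) + W̄(y', Γ(y,B), b') ]/θ ) } and W̄_A(y) = −θγ·log Σ_{y'} P(y,y')·exp( −[ T_{η(1−γρ₁)}[ε](y', y)/(1−γρ₁) + (1−π)·W̄_A(y')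 + π·W̄(y', 0, 0) ]/θ ). Then the functions W_R(y, z, B, b) = A₀ + A₁·z + W̄_R(y, B, b) and W_A(y, z) = A₀ + A₁·z + W̄_A(y), with W(y', z', B', b') = δ(y', B')·W_R(y', z', B', b') + (1 − δ(y', B'))·W_A(y', z'), satisfy the lender's Bellman system with stochastic endowment: for all (y, z, B, b), W_R(y, z, B, b) = max_{b'} { z + G(b, b'; Γ(y,B), y) − θγ·log Σ_{y'} P(y,y')·exp( −T_η[ x ↦ W(y', ρ₀ + ρ₁·z + x, Γ(y,B), b') ](y', y)/θ ) } and W_A(y, z) = z − θγ·log Σ_{y'} P(y,y')·exp( −T_η[ x ↦ (1−π)·W_A(y', ρ₀ + ρ₁·z + x) + π·W(y', ρ₀ + ρ₁·z + x, 0, 0) ](y', y)/θ ), with the same maximizers b' at each state. -/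
open Finset MeasureTheory

/-- Entropic certainty equivalent `T_κ[ε] = −κ·log ∫ exp(−x/κ) dμ(x)` of the innovation
with law `μ`. -/
noncomputable def Teps (κ : ℝ) (μ : Measure ℝ) : ℝ :=
  -κ * Real.log (∫ x, Real.exp (-x / κ) ∂μ)

/-- Entropic operator `T_η[h] = −η·log ∫ exp(−h(x)/η) dμ(x)` applied to `h : ℝ → ℝ`. -/
noncomputable def Th (η : ℝ) (μ : Measure ℝ) (h : ℝ → ℝ) : ℝ :=
  -η * Real.log (∫ x, Real.exp (-h x / η) ∂μ)

/-- The entropic operator applied to an affine function with slope `1 / s`. -/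
theorem Th_affine {η s : ℝ} (hη : 0 < η) (hs : 0 < s) (μ : Measure ℝ) [IsProbabilityMeasure μ]
    (hint : Integrable (fun x => Real.exp (-x / (η * s))) μ) (c : ℝ) :
    Th η μ (fun x => c + 1 / s * x) = c + Teps (η * s) μ / s := by
  have hpos : 0 < ∫ x, Real.exp (-x / (η * s)) ∂μ := integral_exp_pos hint
  have hexp : ∀ x : ℝ, Real.exp (-(c + 1 / s * x) / η) =
      Real.exp (-c / η) * Real.exp (-x / (η * s)) := by
    intro x
    rw [← Real.exp_add]
    congr 1
    field_simp
    ring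
  unfold Th Teps
  simp only [hexp]
  rw [integral_const_mul, Real.log_mul (Real.exp_pos _).ne' hpos.ne', Real.log_exp]
  field_simp
  ring

/-- Translation property of the log-sum-exp aggregator for probability weights. -/
theorem log_sum_mul_exp_shift {Y : Type*} [Fintype Y] (p : Y → ℝ) (hp0 : ∀ y, 0 ≤ p y)
    (hp1 : ∑ y, p y = 1) {θ : ℝ} (k : ℝ) (v : Y → ℝ) :
    Real.log (∑ y, p y * Real.exp (-(k + v y) / θ)) =
      -k / θ + Real.log (∑ y, p y * Real.exp (-v y / θ)) := by
  have hpos : 0 < ∑ y, p y * Real.exp (-v y / θ) := by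
    obtain ⟨y, hy, hpy⟩ := Finset.exists_ne_zero_of_sum_ne_zero (hp1.trans_ne one_ne_zero)
    exact Finset.sum_pos' (fun i _ => mul_nonneg (hp0 i) (Real.exp_pos _).le)
      ⟨y, hy, mul_pos ((hp0 y).lt_of_ne' hpy) (Real.exp_pos _)⟩
  have hsum : ∑ y, p y * Real.exp (-(k + v y) / θ) =
      Real.exp (-k / θ) * ∑ y, p y * Real.exp (-v y / θ) := by
    rw [Finset.mul_sum]
    refine Finset.sum_congr rfl fun y _ => ?_
    rw [mul_left_comm, ← Real.exp_add]
    congr 3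
    ring
  rw [hsum, Real.log_mul (Real.exp_pos _).ne' hpos.ne', Real.log_exp]

/-- **Affine decomposition of the lenders' value in the stochastic endowment economy.**
With `A₁ = 1/(1−γρ₁)` and `A₀ = γA₁ρ₀/(1−γ)`, if `W̄_R, W̄_A` solve the reduced Bellman
system (with the translated entropic innovation term `T_{η(1−γρ₁)}[ε]/(1−γρ₁)`), then
`W_R(y,z,B,b) = A₀ + A₁z + W̄_R(y,B,b)` and `W_A(y,z) = A₀ + A₁z + W̄_A(y)` solve the
lender's Bellman system with stochastic endowment `z' = ρ₀ + ρ₁z + ε`, with the same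
maximizing portfolios `b'` at each state. -/
theorem stmt17 {Y : Type} [Fintype Y] [Nonempty Y]
    (P : Y → Y → ℝ) (hP0 : ∀ y y', 0 ≤ P y y') (hP1 : ∀ y, ∑ y', P y y' = 1)
    (γ θ η ρ₀ ρ₁ : ℝ) (hγ0 : 0 < γ) (hγ1 : γ < 1) (hθ : 0 < θ) (hη : 0 < η)
    (hρ : γ * ρ₁ < 1)
    (μ : Y → Y → Measure ℝ) [∀ y' y, IsProbabilityMeasure (μ y' y)]
    (hμint : ∀ (y' y : Y) (κ : ℝ), 0 < κ →
      Integrable (fun x => Real.exp (-x / κ)) (μ y' y))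
    (Bset : Finset ℝ) (hB0 : (0 : ℝ) ∈ Bset)
    (q : Y → ↥Bset → ℝ) (Cq : ℝ) (hq : ∀ y Bb, |q y Bb| ≤ Cq)
    (lam ψ : ℝ) (hlam0 : 0 < lam) (hlam1 : lam ≤ 1) (hψ : 0 ≤ ψ)
    (Γ : Y → ↥Bset → ↥Bset) (δ : Y → ↥Bset → ℝ) (hδ : ∀ y Bb, δ y Bb = 0 ∨ δ y Bb = 1)
    (π : ℝ) (hπ0 : 0 ≤ π) (hπ1 : π ≤ 1)
    (A₀ A₁ : ℝ) (hA₁ : A₁ = 1 / (1 - γ * ρ₁)) (hA₀ : A₀ = γ * A₁ * ρ₀ / (1 - γ))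
    (WbarR : Y → ↥Bset → ↥Bset → ℝ) (WbarA : Y → ℝ)
    (Wbar : Y → ↥Bset → ↥Bset → ℝ)
    (hWbar : ∀ y' B' b',
      Wbar y' B' b' = δ y' B' * WbarR y' B' b' + (1 - δ y' B') * WbarA y')
    (hRbar : ∀ (y : Y) (Bb b : ↥Bset),
      WbarR y Bb b = ⨆ b' : ↥Bset,
        (Gpay (q y (Γ y Bb)) lam ψ (b : ℝ) (b' : ℝ) -
          θ * γ * Real.log (∑ y', P y y' *
            Real.exp (-(Teps (η * (1 - γ * ρ₁)) (μ y' y) / (1 - γ * ρ₁) +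
              Wbar y' (Γ y Bb) b') / θ))))
    (hAbar : ∀ y : Y,
      WbarA y = -(θ * γ) * Real.log (∑ y', P y y' *
        Real.exp (-(Teps (η * (1 - γ * ρ₁)) (μ y' y) / (1 - γ * ρ₁) +
          ((1 - π) * WbarA y' + π * Wbar y' ⟨0, hB0⟩ ⟨0, hB0⟩)) / θ)))
    (WR : Y → ℝ → ↥Bset → ↥Bset → ℝ) (WA : Y → ℝ → ℝ)
    (hWR : ∀ y z Bb b, WR y z Bb b = A₀ + A₁ * z + WbarR y Bb b)
    (hWA : ∀ y z, WA y z = A₀ + A₁ * z + WbarA y)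
    (W : Y → ℝ → ↥Bset → ↥Bset → ℝ)
    (hW : ∀ y' z' B' b',
      W y' z' B' b' = δ y' B' * WR y' z' B' b' + (1 - δ y' B') * WA y' z') :
    (∀ (y : Y) (z : ℝ) (Bb b : ↥Bset),
      WR y z Bb b = ⨆ b' : ↥Bset,
        (z + Gpay (q y (Γ y Bb)) lam ψ (b : ℝ) (b' : ℝ) -
          θ * γ * Real.log (∑ y', P y y' *
            Real.exp (-(Th η (μ y' y)
              (fun x => W y' (ρ₀ + ρ₁ * z + x) (Γ y Bb) b')) / θ)))) ∧
    (∀ (y : Y) (z : ℝ),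
      WA y z = z - θ * γ * Real.log (∑ y', P y y' *
        Real.exp (-(Th η (μ y' y)
          (fun x => (1 - π) * WA y' (ρ₀ + ρ₁ * z + x) +
            π * W y' (ρ₀ + ρ₁ * z + x) ⟨0, hB0⟩ ⟨0, hB0⟩)) / θ))) ∧
    (∀ (y : Y) (z : ℝ) (Bb b b₀ : ↥Bset),
      (∀ b' : ↥Bset,
        Gpay (q y (Γ y Bb)) lam ψ (b : ℝ) (b' : ℝ) -
            θ * γ * Real.log (∑ y', P y y' *
              Real.exp (-(Teps (η * (1 - γ * ρ₁)) (μ y' y) / (1 - γ * ρ₁) +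
                Wbar y' (Γ y Bb) b') / θ))
          ≤ Gpay (q y (Γ y Bb)) lam ψ (b : ℝ) (b₀ : ℝ) -
            θ * γ * Real.log (∑ y', P y y' *
              Real.exp (-(Teps (η * (1 - γ * ρ₁)) (μ y' y) / (1 - γ * ρ₁) +
                Wbar y' (Γ y Bb) b₀) / θ))) ↔
      (∀ b' : ↥Bset,
        z + Gpay (q y (Γ y Bb)) lam ψ (b : ℝ) (b' : ℝ) -
            θ * γ * Real.log (∑ y', P y y' *
              Real.exp (-(Th η (μ y' y)
                (fun x => W y' (ρ₀ + ρ₁ * z + x) (Γ y Bb) b')) / θ))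
          ≤ z + Gpay (q y (Γ y Bb)) lam ψ (b : ℝ) (b₀ : ℝ) -
            θ * γ * Real.log (∑ y', P y y' *
              Real.exp (-(Th η (μ y' y)
                (fun x => W y' (ρ₀ + ρ₁ * z + x) (Γ y Bb) b₀)) / θ)))) := by
  have hs : 0 < 1 - γ * ρ₁ := by linarith
  have hγ : 1 - γ ≠ 0 := by linarith
  have hκ : 0 < η * (1 - γ * ρ₁) := mul_pos hη hs
  have hcoef : ∀ z, z + γ * (A₀ + A₁ * (ρ₀ + ρ₁ * z)) = A₀ + A₁ * z := by
    intro z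
    have h₁ : A₁ * (1 - γ * ρ₁) = 1 := by rw [hA₁]; field_simp
    have h₀ : A₀ * (1 - γ) = γ * A₁ * ρ₀ := by rw [hA₀]; field_simp
    linear_combination (-z) * h₁ - h₀
  have hWdec : ∀ y' z' B' b', W y' z' B' b' = A₀ + A₁ * z' + Wbar y' B' b' := by
    intro y' z' B' b'
    rw [hW, hWR, hWA, hWbar]
    ring
  have hcont : ∀ (y : Y) (z : ℝ) (h : Y → ℝ → ℝ) (v : Y → ℝ),
      (∀ y' x, h y' x = A₀ + A₁ * (ρ₀ + ρ₁ * z + x) + v y') →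
      z - θ * γ * Real.log (∑ y', P y y' * Real.exp (-(Th η (μ y' y) (h y')) / θ)) =
        A₀ + A₁ * z - θ * γ * Real.log (∑ y', P y y' *
          Real.exp (-(Teps (η * (1 - γ * ρ₁)) (μ y' y) / (1 - γ * ρ₁) + v y') / θ)) := by
    intro y z h v hh
    have hTh : ∀ y', Th η (μ y' y) (h y') = (A₀ + A₁ * (ρ₀ + ρ₁ * z)) +
        (Teps (η * (1 - γ * ρ₁)) (μ y' y) / (1 - γ * ρ₁) + v y') := by
      intro y'
      have hfun : h y' = fun x =>
          (A₀ + A₁ * (ρ₀ + ρ₁ * z) + v y') + 1 / (1 - γ * ρ₁) * x := by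
        funext x
        rw [hh, ← hA₁]
        ring
      rw [hfun, Th_affine hη hs _ (hμint y' y _ hκ)]
      ring
    simp only [hTh]
    rw [log_sum_mul_exp_shift (P y) (hP0 y) (hP1 y), ← hcoef z]
    field_simp
    ring
  have hobj : ∀ (y : Y) (z : ℝ) (Bb b b' : ↥Bset),
      z + Gpay (q y (Γ y Bb)) lam ψ (b : ℝ) (b' : ℝ) -
          θ * γ * Real.log (∑ y', P y y' *
            Real.exp (-(Th η (μ y' y)
              (fun x => W y' (ρ₀ + ρ₁ * z + x) (Γ y Bb) b')) / θ)) =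
        A₀ + A₁ * z + (Gpay (q y (Γ y Bb)) lam ψ (b : ℝ) (b' : ℝ) -
          θ * γ * Real.log (∑ y', P y y' *
            Real.exp (-(Teps (η * (1 - γ * ρ₁)) (μ y' y) / (1 - γ * ρ₁) +
              Wbar y' (Γ y Bb) b') / θ))) := by
    intro y z Bb b b'
    linear_combination hcont y z (fun y' x => W y' (ρ₀ + ρ₁ * z + x) (Γ y Bb) b')
      (fun y' => Wbar y' (Γ y Bb) b') (fun y' x => hWdec _ _ _ _)
  have : Nonempty ↥Bset := ⟨⟨0, hB0⟩⟩
  refine ⟨fun y z Bb b => ?_, fun y z => ?_, fun y z Bb b b₀ => ?_⟩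
  · simp only [hobj]
    rw [hWR, hRbar, add_ciSup (Set.finite_range _).bddAbove]
  · rw [hcont y z _ (fun y' => (1 - π) * WbarA y' + π * Wbar y' ⟨0, hB0⟩ ⟨0, hB0⟩)
      (fun y' x => by rw [hWA, hWdec]; ring), hWA, hAbar]
    ring
  · simp only [hobj, add_le_add_iff_left]
end
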